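/- arXiv:0812.0217 — 3 statements merged into one kernel-verified Lean document; each statement's English description precedes it below -/
import Mathlib

section
/- Let a ∈ ℝ. On U = {(u,φ,p_u,p_φ) ∈ ℝ⁴ : 0 < u < 1}, let Π′ be the antisymmetric 4×4 matrix of ℂ-valued smooth functions with upper-triangular entries (coordinates ordered z = (u,φ,p_u,p_φ)): Π′₁₂ = u^{1/3}, Π′₁₃ = i·u^{1/3}·p_u − u^{4/3}·p_φ/(1−u²), Π′₁₄ = 0, Π′₂₃ = (1−4u²)·p_u/(3u^{2/3}(1−u²)) + i·u^{1/3}(4−u²)·p_φ/(3(1−u²)²), Π′₂₄ = 0, Π′₃₄ = i·a·e^{iφ}/(2u^{1/3}√(1−u²)), where i = √−1. Then Π′ satisfies the Jacobi condition: for all i,j,k ∈ {1,…,4}, Σ_{l=1}^{4}(Π′_{li}∂_lΠ′_{jk} + Π′_{lj}∂_lΠ′_{ki} + Π′_{lk}∂_lΠ′_{ij}) = 0 on U. -/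
open Complex

/-- Partial derivative of a ℂ-valued function on ℝ⁴ in the `i`-th coordinate. -/
noncomputable def pdC (i : Fin 4) (f : (Fin 4 → ℝ) → ℂ) (z : Fin 4 → ℝ) : ℂ :=
  fderiv ℝ f z (Pi.single i 1)

/-- The second (complex) Poisson matrix Π′ of the Goryachev system on T*S²,
in coordinates z = (u, φ, p_u, p_φ); it is P′_{μν} at μ = 0, ν = −a². -/
noncomputable def GorP (a : ℝ) (z : Fin 4 → ℝ) : Matrix (Fin 4) (Fin 4) ℂ :=
  let e12 : ℂ := ((z 0 ^ ((1 : ℝ) / 3) : ℝ) : ℂ)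
  let e13 : ℂ := Complex.I * ((z 0 ^ ((1 : ℝ) / 3) * z 2 : ℝ) : ℂ)
    - ((z 0 ^ ((4 : ℝ) / 3) * z 3 / (1 - (z 0) ^ 2) : ℝ) : ℂ)
  let e23 : ℂ := (((1 - 4 * (z 0) ^ 2) * z 2 / (3 * z 0 ^ ((2 : ℝ) / 3) * (1 - (z 0) ^ 2)) : ℝ) : ℂ)
    + Complex.I * ((z 0 ^ ((1 : ℝ) / 3) * (4 - (z 0) ^ 2) * z 3 / (3 * (1 - (z 0) ^ 2) ^ 2) : ℝ) : ℂ)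
  let e34 : ℂ := Complex.I * (a : ℂ) * Complex.exp (Complex.I * ((z 1 : ℝ) : ℂ))
    / ((2 * z 0 ^ ((1 : ℝ) / 3) * Real.sqrt (1 - (z 0) ^ 2) : ℝ) : ℂ)
  !![0, e12, e13, 0;
     -e12, 0, e23, 0;
     -e13, -e23, 0, e34;
     0, 0, -e34, 0]

/-! The entries of `Π′` separate: `Π′₁₂ = α(u)`, `Π′₁₃ = c α(u) p_u + β(u) p_φ`,
`Π′₂₃ = γ(u) p_u + δ(u) p_φ`, `Π′₃₄ = κ(u) exp (c φ)` with `c = i`, and `Π′₁₄ = Π′₂₄ = 0`.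
For a matrix of this shape the Jacobi condition reduces to two linear ordinary differential
equations in `u`, namely `α dβ/du = (dα/du - γ) β + c α δ` and `α dκ/du = -γ κ`, and the
coefficients of `Π′` solve both of them. -/

section Jacobiator

open scoped Matrix

variable {ι R : Type*} [Fintype ι] [CommRing R]

/-- The Jacobiator of a bivector, as a function of its matrix `P` at a point and of the matrices
`dP l` of the partial derivatives of its entries in the `l`-th coordinate at that point. -/
def jacobiator (P : Matrix ι ι R) (dP : ι → Matrix ι ι R) (i j k : ι) : R :=
  ∑ l, (P l i * dP l j k + P l j * dP l k i + P l k * dP l i j)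

variable {P : Matrix ι ι R} {dP : ι → Matrix ι ι R}

theorem jacobiator_rotate (i j k : ι) : jacobiator P dP j k i = jacobiator P dP i j k :=
  Finset.sum_congr rfl fun _ _ => by ring

theorem jacobiator_swap (hdP : ∀ l, (dP l)ᵀ = -dP l) (i j k : ι) :
    jacobiator P dP j i k = -jacobiator P dP i j k := by
  have hskew (l i j : ι) : dP l j i = -dP l i j := congr_fun₂ (hdP l) i j
  simp only [jacobiator, ← Finset.sum_neg_distrib]
  refine Finset.sum_congr rfl fun l _ => ?_
  rw [hskew l k i, hskew l j k, hskew l i j]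
  ring

theorem jacobiator_eq_zero_of_forall_lt [LinearOrder ι] [IsAddTorsionFree R]
    (hdP : ∀ l, (dP l)ᵀ = -dP l)
    (h : ∀ i j k, i < j → j < k → jacobiator P dP i j k = 0) (i j k : ι) :
    jacobiator P dP i j k = 0 := by
  have hswap := jacobiator_swap (P := P) hdP
  have hrotate := jacobiator_rotate (P := P) (dP := dP)
  have hdiag (i k : ι) : jacobiator P dP i i k = 0 := self_eq_neg.mp (hswap i i k)
  rcases lt_trichotomy i j with hij | hij | hij <;>
  rcases lt_trichotomy j k with hjk | hjk | hjk <;>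
  rcases lt_trichotomy i k with hik | hik | hik <;>
  grind

end Jacobiator

section SkewMatrix

open scoped Matrix

variable {R : Type*} [CommRing R]

/-- The antisymmetric `4 × 4` matrix whose only nonzero entries above the diagonal are
`A` at `(0, 1)`, `B` at `(0, 2)`, `C` at `(1, 2)` and `D` at `(2, 3)`: the shape of `Π′`. -/
def skewMatrix (A B C D : R) : Matrix (Fin 4) (Fin 4) R :=
  !![0, A, B, 0;
     -A, 0, C, 0;
     -B, -C, 0, D;
     0, 0, -D, 0]

theorem skewMatrix_transpose (A B C D : R) :
    (skewMatrix A B C D)ᵀ = -skewMatrix A B C D := by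
  ext i j
  fin_cases i <;> fin_cases j <;> simp [skewMatrix]

theorem jacobiator_skewMatrix_eq_zero [IsAddTorsionFree R] {A B C D : R} {dA dB dC dD : Fin 4 → R}
    (h012 : A * (dB 0 + dC 1) + B * dC 2 + D * dA 3 = B * dA 0 + C * (dA 1 + dB 2))
    (h013 : D * dA 2 = 0)
    (h023 : A * dD 1 + B * dD 2 = D * dB 2)
    (h123 : A * dD 0 + D * dC 2 = C * dD 2) (i j k : Fin 4) :
    jacobiator (skewMatrix A B C D) (fun l => skewMatrix (dA l) (dB l) (dC l) (dD l)) i j k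
      = 0 := by
  refine jacobiator_eq_zero_of_forall_lt (fun _ => skewMatrix_transpose _ _ _ _) ?_ i j k
  intro i j k hij hjk
  obtain ⟨rfl, rfl, rfl⟩ | ⟨rfl, rfl, rfl⟩ | ⟨rfl, rfl, rfl⟩ | ⟨rfl, rfl, rfl⟩ :
      (i = 0 ∧ j = 1 ∧ k = 2) ∨ (i = 0 ∧ j = 1 ∧ k = 3) ∨
        (i = 0 ∧ j = 2 ∧ k = 3) ∨ (i = 1 ∧ j = 2 ∧ k = 3) := by lia
  all_goals
    simp only [jacobiator, skewMatrix, Fin.sum_univ_four, Matrix.of_apply, Matrix.cons_val]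
  · linear_combination -h012
  · linear_combination h013
  · linear_combination -h023
  · linear_combination h123

end SkewMatrix

section PartialDerivatives

variable {f g : (Fin 4 → ℝ) → ℂ} {z : Fin 4 → ℝ}

theorem pdC_const (i : Fin 4) (c : ℂ) (z : Fin 4 → ℝ) : pdC i (fun _ => c) z = 0 := by
  simp [pdC]

theorem pdC_neg (i : Fin 4) (f : (Fin 4 → ℝ) → ℂ) (z : Fin 4 → ℝ) :
    pdC i (fun w => -f w) z = -pdC i f z := by
  simp [pdC, fderiv_fun_neg]

theorem pdC_add (i : Fin 4) (hf : DifferentiableAt ℝ f z) (hg : DifferentiableAt ℝ g z) :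
    pdC i (fun w => f w + g w) z = pdC i f z + pdC i g z := by
  simp [pdC, fderiv_fun_add hf hg]

theorem pdC_mul (i : Fin 4) (hf : DifferentiableAt ℝ f z) (hg : DifferentiableAt ℝ g z) :
    pdC i (fun w => f w * g w) z = f z * pdC i g z + pdC i f z * g z := by
  simp [pdC, fderiv_fun_mul hf hg, mul_comm]

theorem pdC_comp_apply (i : Fin 4) {k : Fin 4} {h : ℝ → ℂ} {h' : ℂ}
    (hh : HasDerivAt h h' (z k)) :
    pdC i (fun w => h (w k)) z = (Pi.single k h' : Fin 4 → ℂ) i := by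
  have hproj : HasFDerivAt (fun w : Fin 4 → ℝ => w k)
      (ContinuousLinearMap.proj (R := ℝ) (φ := fun _ => ℝ) k) z := hasFDerivAt_apply k z
  have hcomp : HasFDerivAt (fun w : Fin 4 → ℝ => h (w k)) _ z := hh.hasFDerivAt.comp z hproj
  rw [pdC, hcomp.fderiv]
  rcases eq_or_ne i k with rfl | hik
  · simp
  · simp [hik, hik.symm]

theorem pdC_skewMatrix (l : Fin 4) (A B C D : (Fin 4 → ℝ) → ℂ) (z : Fin 4 → ℝ) :
    (Matrix.of fun i j => pdC l (fun w => skewMatrix (A w) (B w) (C w) (D w) i j) z)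
      = skewMatrix (pdC l A z) (pdC l B z) (pdC l C z) (pdC l D z) := by
  ext i j
  fin_cases i <;> fin_cases j <;> simp [skewMatrix, pdC_neg, pdC_const]

end PartialDerivatives

section SeparatedBivector

/-- A function linear in the momenta `(p_u, p_φ) = (w 2, w 3)` with coefficients depending only
on `u = w 0`. -/
def momentumLinear (f g : ℝ → ℂ) (w : Fin 4 → ℝ) : ℂ := f (w 0) * w 2 + g (w 0) * w 3

/-- The antisymmetric matrices of functions of `(u, φ, p_u, p_φ)` with the same dependence on
`φ`, `p_u` and `p_φ` as `Π′`, which is the case `c = i`; the coefficients `α`, `β`, `γ`, `δ`, `κ`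
are functions of `u`. -/
noncomputable def separatedBivector (c : ℂ) (α β γ δ κ : ℝ → ℂ) (w : Fin 4 → ℝ) :
    Matrix (Fin 4) (Fin 4) ℂ :=
  skewMatrix (α (w 0)) (momentumLinear (fun u => c * α u) β w) (momentumLinear γ δ w)
    (κ (w 0) * exp (c * w 1))

variable {z : Fin 4 → ℝ} {c : ℂ} {α β γ δ κ : ℝ → ℂ} {α' β' κ' : ℂ}

theorem pdC_momentumLinear (l : Fin 4) {f g : ℝ → ℂ} {f' g' : ℂ}
    (hf : HasDerivAt f f' (z 0)) (hg : HasDerivAt g g' (z 0)) :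
    pdC l (momentumLinear f g) z = ![f' * z 2 + g' * z 3, 0, f (z 0), g (z 0)] l := by
  have hfd := hf.differentiableAt
  have hgd := hg.differentiableAt
  have hp (k : Fin 4) : HasDerivAt (fun t : ℝ => (t : ℂ)) 1 (z k) := ofRealCLM.hasDerivAt
  have hpd (k : Fin 4) := (hp k).differentiableAt
  unfold momentumLinear
  rw [pdC_add l (by fun_prop) (by fun_prop), pdC_mul l (by fun_prop) (by fun_prop),
    pdC_mul l (by fun_prop) (by fun_prop), pdC_comp_apply l hf, pdC_comp_apply l hg,
    pdC_comp_apply l (hp 2), pdC_comp_apply l (hp 3)]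
  fin_cases l <;> simp

theorem pdC_mul_exp (l : Fin 4) (hκ : HasDerivAt κ κ' (z 0)) :
    pdC l (fun w => κ (w 0) * exp (c * w 1)) z
      = ![κ' * exp (c * z 1), κ (z 0) * (exp (c * z 1) * c), 0, 0] l := by
  have hexp : HasDerivAt (fun t : ℝ => exp (c * t)) (exp (c * z 1) * c) (z 1) := by
    simpa using ((hasDerivAt_id (z 1)).ofReal_comp.const_mul c).cexp
  have hκd := hκ.differentiableAt
  rw [pdC_mul l (f := fun w => κ (w 0)) (g := fun w => exp (c * w 1)) (by fun_prop) (by fun_prop),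
    pdC_comp_apply l hκ, pdC_comp_apply (h := fun t => exp (c * t)) l hexp]
  fin_cases l <;> simp

theorem jacobiator_separatedBivector_eq_zero
    (hα : HasDerivAt α α' (z 0)) (hβ : HasDerivAt β β' (z 0)) (hκ : HasDerivAt κ κ' (z 0))
    (hγ : DifferentiableAt ℝ γ (z 0)) (hδ : DifferentiableAt ℝ δ (z 0))
    (hβ_ode : α (z 0) * β' = (α' - γ (z 0)) * β (z 0) + c * α (z 0) * δ (z 0))
    (hκ_ode : α (z 0) * κ' = -γ (z 0) * κ (z 0)) (i j k : Fin 4) :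
    jacobiator (separatedBivector c α β γ δ κ z)
      (fun l => Matrix.of fun i j => pdC l (fun w => separatedBivector c α β γ δ κ w i j) z)
      i j k = 0 := by
  have hdA (l : Fin 4) : pdC l (fun w => α (w 0)) z = ![α', 0, 0, 0] l := by
    rw [pdC_comp_apply l hα]
    fin_cases l <;> simp
  have hdB (l : Fin 4) := pdC_momentumLinear l (hα.const_mul c) hβ
  have hdC (l : Fin 4) := pdC_momentumLinear l hγ.hasDerivAt hδ.hasDerivAt
  have hdD (l : Fin 4) := pdC_mul_exp (c := c) l hκ
  simp only [separatedBivector, pdC_skewMatrix]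
  apply jacobiator_skewMatrix_eq_zero <;>
    simp only [hdA, hdB, hdC, hdD, momentumLinear, Matrix.cons_val]
  · linear_combination z 3 * hβ_ode
  · ring
  · ring
  · linear_combination exp (c * z 1) * hκ_ode

end SeparatedBivector

section RealFunctions

variable {u : ℝ}

theorem hasDerivAt_rpow_const_div (hu : u ≠ 0) (r : ℝ) :
    HasDerivAt (fun t : ℝ => t ^ r) (r * u ^ r / u) u := by
  simpa only [Real.rpow_sub_one hu, mul_div_assoc] using
    Real.hasDerivAt_rpow_const (p := r) (Or.inl hu)

theorem hasDerivAt_one_sub_sq (u : ℝ) : HasDerivAt (fun t : ℝ => 1 - t ^ 2) (-(2 * u)) u := by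
  simpa using (hasDerivAt_pow 2 u).const_sub 1

theorem one_sub_sq_pos (h0 : 0 < u) (h1 : u < 1) : 0 < 1 - u ^ 2 := by nlinarith

end RealFunctions

namespace GorP

/-- The coefficient `Π′₁₂`. -/
noncomputable def alpha (u : ℝ) : ℝ := u ^ ((1 : ℝ) / 3)

/-- The coefficient of `-p_φ` in `Π′₁₃`. -/
noncomputable def beta (u : ℝ) : ℝ := u ^ ((4 : ℝ) / 3) / (1 - u ^ 2)

/-- The coefficient of `p_u` in `Π′₂₃`. -/
noncomputable def gamma (u : ℝ) : ℝ := (1 - 4 * u ^ 2) / (3 * u ^ ((2 : ℝ) / 3) * (1 - u ^ 2))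

/-- The coefficient of `i p_φ` in `Π′₂₃`. -/
noncomputable def delta (u : ℝ) : ℝ :=
  alpha u * (4 - u ^ 2) / (3 * (1 - u ^ 2) ^ 2)

/-- The coefficient of `i a exp (i φ)` in `Π′₃₄`. -/
noncomputable def kappa (u : ℝ) : ℝ := (2 * alpha u * √(1 - u ^ 2))⁻¹

theorem eq_separatedBivector (a : ℝ) :
    GorP a = separatedBivector I (fun u => alpha u) (fun u => -beta u) (fun u => gamma u)
      (fun u => I * delta u) (fun u => I * a * kappa u) := by
  funext w
  change skewMatrix _ _ _ _ = skewMatrix _ _ _ _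
  congr 1 <;>
  · simp only [momentumLinear, alpha, beta, gamma, delta, kappa]
    push_cast
    ring

section Coefficients

variable {u : ℝ}

theorem hasDerivAt_alpha (hu : u ≠ 0) : HasDerivAt alpha (alpha u / (3 * u)) u :=
  (hasDerivAt_rpow_const_div hu _).congr_deriv (by rw [alpha]; ring)

theorem alpha_pos (h0 : 0 < u) : 0 < alpha u := Real.rpow_pos_of_pos h0 _

theorem rpow_two_thirds (h0 : 0 < u) : u ^ ((2 : ℝ) / 3) = u / alpha u := by
  rw [alpha, ← Real.rpow_one_sub' h0.le (by norm_num)]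
  norm_num

theorem rpow_four_thirds (h0 : 0 < u) : u ^ ((4 : ℝ) / 3) = u * alpha u := by
  rw [alpha, ← Real.rpow_one_add' h0.le (by norm_num)]
  norm_num

theorem gamma_div_alpha (h0 : 0 < u) :
    gamma u / alpha u = (1 - 4 * u ^ 2) / (3 * u * (1 - u ^ 2)) := by
  have hα := (alpha_pos h0).ne'
  rw [gamma, rpow_two_thirds h0]
  field_simp

theorem hasDerivAt_beta (h0 : 0 < u) (h1 : u < 1) :
    HasDerivAt beta ((1 / (3 * u) - gamma u / alpha u) * beta u + delta u) u := by
  have hv := (one_sub_sq_pos h0 h1).ne'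
  refine ((hasDerivAt_rpow_const_div h0.ne' _).fun_div
    (hasDerivAt_one_sub_sq u) hv).congr_deriv ?_
  rw [gamma_div_alpha h0, beta, delta, rpow_four_thirds h0]
  field_simp
  ring

theorem hasDerivAt_kappa (h0 : 0 < u) (h1 : u < 1) :
    HasDerivAt kappa (-(gamma u / alpha u) * kappa u) u := by
  have hv := one_sub_sq_pos h0 h1
  have hα := alpha_pos h0
  have hden : 2 * alpha u * √(1 - u ^ 2) ≠ 0 := by positivity
  refine ((((hasDerivAt_alpha h0.ne').const_mul 2).fun_mul
    ((hasDerivAt_one_sub_sq u).sqrt hv.ne')).fun_inv hden).congr_deriv ?_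
  rw [gamma_div_alpha h0, kappa]
  field_simp
  rw [Real.sq_sqrt hv.le]
  ring

theorem differentiableAt_gamma (h0 : 0 < u) (h1 : u < 1) : DifferentiableAt ℝ gamma u := by
  have hv := (one_sub_sq_pos h0 h1).ne'
  have hr := (Real.rpow_pos_of_pos h0 (2 / 3)).ne'
  unfold gamma
  fun_prop (disch := simp [h0.ne', hr, hv])

theorem differentiableAt_delta (h0 : 0 < u) (h1 : u < 1) : DifferentiableAt ℝ delta u := by
  have hv := (one_sub_sq_pos h0 h1).ne'
  have hα := (hasDerivAt_alpha h0.ne').differentiableAt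
  unfold delta
  fun_prop (disch := simp [hv])

end Coefficients

end GorP

/-- The complex matrix Π′ of the Goryachev system satisfies the Jacobi
condition on 0 < u < 1. -/
theorem GorP_jacobi (a : ℝ) (z : Fin 4 → ℝ) (h0 : 0 < z 0) (h1 : z 0 < 1) :
    ∀ i j k : Fin 4,
      ∑ l : Fin 4,
        (GorP a z l i * pdC l (fun w => GorP a w j k) z
          + GorP a z l j * pdC l (fun w => GorP a w k i) z
          + GorP a z l k * pdC l (fun w => GorP a w i j) z) = 0 := by
  have hα : (GorP.alpha (z 0) : ℂ) ≠ 0 := ofReal_ne_zero.mpr (GorP.alpha_pos h0).ne'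
  have hcancel := mul_div_cancel₀ (GorP.gamma (z 0) : ℂ) hα
  have hγ := (GorP.differentiableAt_gamma h0 h1).hasDerivAt.ofReal_comp.differentiableAt
  have hδ := (GorP.differentiableAt_delta h0 h1).hasDerivAt.ofReal_comp.differentiableAt
  rw [GorP.eq_separatedBivector]
  refine jacobiator_separatedBivector_eq_zero
    (GorP.hasDerivAt_alpha h0.ne').ofReal_comp (GorP.hasDerivAt_beta h0 h1).ofReal_comp.fun_neg
    ((GorP.hasDerivAt_kappa h0 h1).ofReal_comp.const_mul (I * a)) hγ (hδ.const_mul I) ?_ ?_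
  · push_cast
    linear_combination GorP.beta (z 0) * hcancel - GorP.alpha (z 0) * GorP.delta (z 0) * I_sq
  · push_cast
    linear_combination -I * a * GorP.kappa (z 0) * hcancel
end

section
/- Let a, b ∈ ℝ. On U = {(u,φ,p_u,p_φ) ∈ ℝ⁴ : 0 < u < 1}, define H₁ = J₁² + J₂² + (4/3)J₃² + a·x₁/x₃^{2/3} + b/x₃^{2/3} and H₂ = −(2/3)J₃(J₁² + J₂² + (8/9)J₃² + b/x₃^{2/3}) + a·x₃^{1/3}·J₁ − 2a·x₁·J₃/(3x₃^{2/3}), where x₁ = √(1−u²)sin φ, x₂ = √(1−u²)cos φ, x₃ = u, J₁ = (u/√(1−u²))sin φ·p_φ + √(1−u²)cos φ·p_u, J₂ = (u/√(1−u²))cos φ·p_φ − √(1−u²)sin φ·p_u, J₃ = −p_φ. Let {f,g}′ be the complex bracket defined by the antisymmetric matrix Π′ with upper entries Π′₁₂ = u^{1/3}, Π′₁₃ = i·u^{1/3}·p_u − u^{4/3}·p_φ/(1−u²), Π′₁₄ = 0, Π′₂₃ = (1−4u²)·p_u/(3u^{2/3}(1−u²)) + i·u^{1/3}(4−u²)·p_φ/(3(1−u²)²),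 Π′₂₄ = 0, Π′₃₄ = i·a·e^{iφ}/(2u^{1/3}√(1−u²)). Then {H₁, H₂}′ = 0 on U. -/
open Complex

/-- Partial derivative of a real-valued function on ℝ⁴. -/
noncomputable def pd4 (i : Fin 4) (f : (Fin 4 → ℝ) → ℝ) (z : Fin 4 → ℝ) : ℝ :=
  fderiv ℝ f z (Pi.single i 1)

/-- x₁ = √(1−u²) sin φ, x₂ = √(1−u²) cos φ, x₃ = u. -/
noncomputable def sphX : Fin 3 → (Fin 4 → ℝ) → ℝ
  | 0 => fun z => Real.sqrt (1 - (z 0) ^ 2) * Real.sin (z 1)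
  | 1 => fun z => Real.sqrt (1 - (z 0) ^ 2) * Real.cos (z 1)
  | 2 => fun z => z 0

/-- J₁, J₂, J₃ on T*S² in coordinates (u, φ, p_u, p_φ). -/
noncomputable def sphJ : Fin 3 → (Fin 4 → ℝ) → ℝ
  | 0 => fun z => z 0 / Real.sqrt (1 - (z 0) ^ 2) * Real.sin (z 1) * z 3
      + Real.sqrt (1 - (z 0) ^ 2) * Real.cos (z 1) * z 2
  | 1 => fun z => z 0 / Real.sqrt (1 - (z 0) ^ 2) * Real.cos (z 1) * z 3
      - Real.sqrt (1 - (z 0) ^ 2) * Real.sin (z 1) * z 2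
  | 2 => fun z => -z 3

/-- The quadratic integral H₁ of the Goryachev system on T*S². -/
noncomputable def H1Gor (a b : ℝ) (z : Fin 4 → ℝ) : ℝ :=
  (sphJ 0 z) ^ 2 + (sphJ 1 z) ^ 2 + (4 / 3) * (sphJ 2 z) ^ 2
    + a * sphX 0 z / (sphX 2 z) ^ ((2 : ℝ) / 3) + b / (sphX 2 z) ^ ((2 : ℝ) / 3)

/-- The cubic integral H₂ of the Goryachev system on T*S². -/
noncomputable def H2Gor (a b : ℝ) (z : Fin 4 → ℝ) : ℝ :=
  -(2 / 3) * sphJ 2 z * ((sphJ 0 z) ^ 2 + (sphJ 1 z) ^ 2 + (8 / 9) * (sphJ 2 z) ^ 2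
      + b / (sphX 2 z) ^ ((2 : ℝ) / 3))
    + a * (sphX 2 z) ^ ((1 : ℝ) / 3) * sphJ 0 z
    - 2 * a * sphX 0 z * sphJ 2 z / (3 * (sphX 2 z) ^ ((2 : ℝ) / 3))

/-- The complex bracket {f,g}′ of real functions associated with Π′. -/
noncomputable def GorBr (a : ℝ) (f g : (Fin 4 → ℝ) → ℝ) (z : Fin 4 → ℝ) : ℂ :=
  ∑ i : Fin 4, ∑ j : Fin 4, (pd4 i f z : ℂ) * GorP a z i j * (pd4 j g z : ℂ)

/-! Write `F = x₃^{1/3} J₁`. Then `H₂ = -(2/3) J₃ H₁ + (8/27) J₃³ + a F`, so that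
`{H₁, H₂}′ = -(2/3) (H₁ - (4/3) J₃²) {H₁, J₃}′ + a {H₁, F}′`. With respect to `Π′` the Hamiltonian
vector fields of `J₃` and of `F` are both `i e^{iφ}` times a *real* vector field, so the two
remaining brackets are `i e^{iφ}` times real directional derivatives of `H₁`. Since
`J₁² + J₂² = (1 - u²) p_u² + u² p_φ² / (1 - u²)`, these are explicit: for
`K = i e^{iφ} √(1 - u²) p_u / u^{1/3}` one finds `{H₁, J₃}′ = -a K` and
`{H₁, F}′ = -(2/3) (H₁ - (4/3) J₃²) K`, and the two contributions cancel. -/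

section CotangentPairing

variable {ι : Type*} [Fintype ι] [DecidableEq ι]

/-- The complex-valued bilinear form `(α, β) ↦ ∑ αᵢ Pᵢⱼ βⱼ` on real covectors attached to a
bivector `P`; evaluated on differentials it is the bracket of functions. -/
noncomputable def cotangentPairing (P : Matrix ι ι ℂ) :
    ((ι → ℝ) →L[ℝ] ℝ) →ₗ[ℝ] ((ι → ℝ) →L[ℝ] ℝ) →ₗ[ℝ] ℂ :=
  let coords : ((ι → ℝ) →L[ℝ] ℝ) →ₗ[ℝ] ι → ℝ :=
    LinearMap.pi fun i ↦ (ContinuousLinearMap.apply ℝ ℝ (Pi.single i 1)).toLinearMap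
  (Matrix.toLinearMap₂' ℝ P).compl₁₂ coords coords

lemma cotangentPairing_apply (P : Matrix ι ι ℂ) (α β : (ι → ℝ) →L[ℝ] ℝ) :
    cotangentPairing P α β =
      ∑ i, ∑ j, (α (Pi.single i 1) : ℂ) * P i j * (β (Pi.single j 1) : ℂ) := by
  simp only [cotangentPairing, LinearMap.compl₁₂_apply, Matrix.toLinearMap₂'_apply,
    LinearMap.pi_apply, ContinuousLinearMap.coe_coe, ContinuousLinearMap.apply_apply,
    Complex.real_smul]
  exact Finset.sum_congr rfl fun i _ ↦ Finset.sum_congr rfl fun j _ ↦ by ring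

lemma cotangentPairing_proj_proj (P : Matrix ι ι ℂ) (i j : ι) :
    cotangentPairing P (ContinuousLinearMap.proj i) (ContinuousLinearMap.proj j) = P i j := by
  simp [cotangentPairing_apply, Pi.single_apply, apply_ite Complex.ofReal]

lemma cotangentPairing_self {P : Matrix ι ι ℂ} (hP : P.transpose = -P)
    (α : (ι → ℝ) →L[ℝ] ℝ) : cotangentPairing P α α = 0 := by
  have hP' (i j : ι) : P i j = -P j i := congrFun₂ hP j i
  refine self_eq_neg.1 ?_
  rw [cotangentPairing_apply]
  nth_rewrite 1 [Finset.sum_comm]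
  simp only [← Finset.sum_neg_distrib]
  refine Finset.sum_congr rfl fun i _ ↦ Finset.sum_congr rfl fun j _ ↦ ?_
  rw [hP' j i]
  ring

lemma cotangentPairing_eq_mul_apply {P : Matrix ι ι ℂ} {β : (ι → ℝ) →L[ℝ] ℝ} {k : ℂ} {v : ι → ℝ}
    (hv : ∀ i, cotangentPairing P (ContinuousLinearMap.proj i) β = k * v i)
    (α : (ι → ℝ) →L[ℝ] ℝ) : cotangentPairing P α β = k * (α v : ℂ) := by
  have hαw (w : ι → ℝ) : α w = ∑ i, w i * α (Pi.single i 1) := by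
    conv_lhs => rw [← (Pi.basisFun ℝ ι).sum_repr w]
    simp
  have hα : α = ∑ i, α (Pi.single i 1) • ContinuousLinearMap.proj i := by
    ext w
    simp [hαw w, mul_comm]
  rw [hαw v]
  conv_lhs => rw [hα]
  simp only [map_sum, map_smul, LinearMap.sum_apply, LinearMap.smul_apply, hv, real_smul,
    ofReal_sum, ofReal_mul, Finset.mul_sum]
  exact Finset.sum_congr rfl fun i _ ↦ by ring

end CotangentPairing

section Calculus

lemma cube_rpow_natCast_div_three {c : ℝ} (hc : 0 ≤ c) (n : ℕ) :
    (c ^ 3) ^ ((n : ℝ) / 3) = c ^ n := by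
  rw [← Real.rpow_natCast_mul hc, Nat.cast_ofNat, mul_div_cancel₀ _ three_ne_zero,
    Real.rpow_natCast]

lemma hasDerivAt_rpow_const_div_self {u : ℝ} (hu : u ≠ 0) (r : ℝ) :
    HasDerivAt (fun x : ℝ ↦ x ^ r) (r * (u ^ r / u)) u :=
  (Real.hasDerivAt_rpow_const (Or.inl hu)).congr_deriv (by rw [Real.rpow_sub_one hu])

lemma hasDerivAt_sqrt_one_sub_sq {u : ℝ} (hu : 1 - u ^ 2 ≠ 0) :
    HasDerivAt (fun x : ℝ ↦ √(1 - x ^ 2)) (-(u / √(1 - u ^ 2))) u :=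
  (((hasDerivAt_pow 2 u).const_sub 1).sqrt hu).congr_deriv (by
    rw [Nat.cast_ofNat, pow_one, neg_div, mul_div_mul_left _ _ two_ne_zero])

lemma hasDerivAt_div_sqrt_one_sub_sq {u : ℝ} (hu : 0 < 1 - u ^ 2) :
    HasDerivAt (fun x : ℝ ↦ x / √(1 - x ^ 2)) (1 / √(1 - u ^ 2) ^ 3) u := by
  have hs : √(1 - u ^ 2) ≠ 0 := (Real.sqrt_pos.2 hu).ne'
  refine ((hasDerivAt_id' u).div (hasDerivAt_sqrt_one_sub_sq hu.ne') hs).congr_deriv ?_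
  field_simp
  linear_combination Real.sq_sqrt hu.le

lemma hasDerivAt_four_sub_sq_div_one_sub_sq {u : ℝ} (hu : 1 - u ^ 2 ≠ 0) :
    HasDerivAt (fun x : ℝ ↦ (4 - x ^ 2) / (1 - x ^ 2)) (6 * u / (1 - u ^ 2) ^ 2) u := by
  have hd := ((hasDerivAt_pow 2 u).const_sub 4).div ((hasDerivAt_pow 2 u).const_sub 1) hu
  refine hd.congr_deriv ?_
  rw [Nat.cast_ofNat, pow_one]
  ring

lemma I_mul_exp_I_mul_ofReal (t : ℝ) :
    I * exp (I * t) = I * Real.cos t - Real.sin t := by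
  rw [mul_comm I (t : ℂ), exp_mul_I, ofReal_cos, ofReal_sin]
  linear_combination sin (t : ℂ) * I_sq

end Calculus

/-- `c = u^{1/3}` and `s = √(1 - u²)` at the point `z = (u, φ, p_u, p_φ)`. The two radicals are
recorded through the polynomial equations they satisfy, because over them the entries of `Π′` and
the differentials of the integrals become rational functions. -/
structure RadicalsAt (z : Fin 4 → ℝ) (c s : ℝ) : Prop where
  c_pos : 0 < c
  s_pos : 0 < s
  cube_eq : z 0 = c ^ 3
  sq_eq : 1 - z 0 ^ 2 = s ^ 2

lemma exists_radicalsAt {z : Fin 4 → ℝ} (h0 : 0 < z 0) (h1 : z 0 < 1) :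
    ∃ c s, RadicalsAt z c s := by
  have hpos : 0 < 1 - z 0 ^ 2 := sub_pos.2 (pow_lt_one₀ h0.le h1 two_ne_zero)
  refine ⟨z 0 ^ (3⁻¹ : ℝ), √(1 - z 0 ^ 2), Real.rpow_pos_of_pos h0 _, Real.sqrt_pos.2 hpos, ?_,
    (Real.sq_sqrt hpos.le).symm⟩
  exact (Real.rpow_inv_natCast_pow h0.le three_ne_zero).symm

namespace RadicalsAt

variable {z : Fin 4 → ℝ} {c s : ℝ}

lemma one_sub_sq_pos (h : RadicalsAt z c s) : 0 < 1 - z 0 ^ 2 :=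
  h.sq_eq ▸ pow_pos h.s_pos 2

lemma u_ne_zero (h : RadicalsAt z c s) : z 0 ≠ 0 :=
  h.cube_eq ▸ (pow_pos h.c_pos 3).ne'

lemma sq_eq_one_sub_pow (h : RadicalsAt z c s) : s ^ 2 = 1 - c ^ 6 := by
  rw [← h.sq_eq, h.cube_eq, ← pow_mul]

lemma sqrt_eq (h : RadicalsAt z c s) : √(1 - z 0 ^ 2) = s := by
  rw [h.sq_eq, Real.sqrt_sq h.s_pos.le]

lemma rpow_natCast_div_three_eq (h : RadicalsAt z c s) (n : ℕ) : z 0 ^ ((n : ℝ) / 3) = c ^ n := by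
  rw [h.cube_eq, cube_rpow_natCast_div_three h.c_pos.le]

lemma rpow_one_div_three_eq (h : RadicalsAt z c s) : z 0 ^ ((1 : ℝ) / 3) = c := by
  simpa using h.rpow_natCast_div_three_eq 1

lemma rpow_two_div_three_eq (h : RadicalsAt z c s) : z 0 ^ ((2 : ℝ) / 3) = c ^ 2 :=
  mod_cast h.rpow_natCast_div_three_eq 2

lemma sphX_zero_eq (h : RadicalsAt z c s) : sphX 0 z = s * Real.sin (z 1) := by
  simp only [sphX, h.sqrt_eq]

lemma sphJ_one_eq (h : RadicalsAt z c s) :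
    sphJ 1 z = c ^ 3 / s * Real.cos (z 1) * z 3 - s * Real.sin (z 1) * z 2 := by
  simp only [sphJ, h.sqrt_eq]
  rw [h.cube_eq]

lemma GorP_eq (h : RadicalsAt z c s) (a : ℝ) :
    GorP a z =
      let e12 : ℂ := c
      let e13 : ℂ := I * c * z 2 - c ^ 4 * z 3 / s ^ 2
      let e23 : ℂ := (1 - 4 * c ^ 6) * z 2 / (3 * c ^ 2 * s ^ 2)
        + I * c * (4 - c ^ 6) * z 3 / (3 * s ^ 4)
      let e34 : ℂ := I * exp (I * z 1) * a / (2 * c * s)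
      !![0, e12, e13, 0; -e12, 0, e23, 0; -e13, -e23, 0, e34; 0, 0, -e34, 0] := by
  have h4 : z 0 ^ ((4 : ℝ) / 3) = c ^ 4 := mod_cast h.rpow_natCast_div_three_eq 4
  have h6 : z 0 ^ 2 = c ^ 6 := by rw [h.cube_eq, ← pow_mul]
  rw [GorP, h.sqrt_eq, h.sq_eq, h.rpow_one_div_three_eq, h.rpow_two_div_three_eq, h4, h6]
  push_cast
  ring_nf

end RadicalsAt

section Differentials

/-- The function `x₃^{1/3} J₁`, the part of `H₂` that is not a polynomial in `H₁` and `J₃`. -/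
noncomputable def scaledJ (z : Fin 4 → ℝ) : ℝ :=
  sphX 2 z ^ ((1 : ℝ) / 3) * sphJ 0 z

lemma H2Gor_eq (a b : ℝ) (z : Fin 4 → ℝ) :
    H2Gor a b z = -(2 / 3) * (sphJ 2 z * H1Gor a b z) + 8 / 27 * sphJ 2 z ^ 3 + a * scaledJ z := by
  simp only [H2Gor, H1Gor, scaledJ]
  ring

lemma sphJ_zero_sq_add_sphJ_one_sq {z : Fin 4 → ℝ} (hz : 0 < 1 - z 0 ^ 2) :
    sphJ 0 z ^ 2 + sphJ 1 z ^ 2 =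
      (1 - z 0 ^ 2) * z 2 ^ 2 + z 0 ^ 2 / (1 - z 0 ^ 2) * z 3 ^ 2 := by
  simp only [sphJ]
  nth_rewrite 5 6 [← Real.sq_sqrt hz.le]
  linear_combination (√(1 - z 0 ^ 2) ^ 2 * z 2 ^ 2 + z 0 ^ 2 / √(1 - z 0 ^ 2) ^ 2 * z 3 ^ 2) *
    Real.sin_sq_add_cos_sq (z 1)

lemma H1Gor_eq (a b : ℝ) {z : Fin 4 → ℝ} (hz : 0 < 1 - z 0 ^ 2) :
    H1Gor a b z = (1 - z 0 ^ 2) * z 2 ^ 2 + 1 / 3 * ((4 - z 0 ^ 2) / (1 - z 0 ^ 2)) * z 3 ^ 2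
      + (a * sphX 0 z + b) * (z 0 ^ ((2 : ℝ) / 3))⁻¹ := by
  have hX : sphX 2 z = z 0 := rfl
  have hJ2 : sphJ 2 z = -z 3 := rfl
  rw [H1Gor, sphJ_zero_sq_add_sphJ_one_sq hz, hX, hJ2]
  field_simp [hz.ne']
  ring

variable {z : Fin 4 → ℝ} {c s : ℝ}

lemma hasFDerivAt_coord (i : Fin 4) (z : Fin 4 → ℝ) :
    HasFDerivAt (fun x : Fin 4 → ℝ ↦ x i) (ContinuousLinearMap.proj (R := ℝ) i) z :=
  hasFDerivAt_apply i z

lemma hasFDerivAt_sphJ_two (z : Fin 4 → ℝ) :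
    HasFDerivAt (sphJ 2) (-ContinuousLinearMap.proj (R := ℝ) 3) z :=
  (hasFDerivAt_coord 3 z).neg

namespace RadicalsAt

lemma hasFDerivAt_sqrt (h : RadicalsAt z c s) :
    HasFDerivAt (fun x : Fin 4 → ℝ ↦ √(1 - x 0 ^ 2))
      (-(c ^ 3 / s) • ContinuousLinearMap.proj (R := ℝ) 0) z := by
  have hd :=
    (hasDerivAt_sqrt_one_sub_sq h.one_sub_sq_pos.ne').comp_hasFDerivAt z (hasFDerivAt_coord 0 z)
  rwa [h.sqrt_eq, h.cube_eq] at hd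

lemma hasFDerivAt_div_sqrt (h : RadicalsAt z c s) :
    HasFDerivAt (fun x : Fin 4 → ℝ ↦ x 0 / √(1 - x 0 ^ 2))
      ((1 / s ^ 3) • ContinuousLinearMap.proj (R := ℝ) 0) z := by
  have hd :=
    (hasDerivAt_div_sqrt_one_sub_sq h.one_sub_sq_pos).comp_hasFDerivAt z (hasFDerivAt_coord 0 z)
  rwa [h.sqrt_eq] at hd

lemma hasFDerivAt_rpow_one_div_three (h : RadicalsAt z c s) :
    HasFDerivAt (fun x : Fin 4 → ℝ ↦ x 0 ^ ((1 : ℝ) / 3))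
      ((1 / (3 * c ^ 2)) • ContinuousLinearMap.proj (R := ℝ) 0) z := by
  have hc := h.c_pos.ne'
  have hd :=
    (hasDerivAt_rpow_const_div_self h.u_ne_zero (1 / 3)).comp_hasFDerivAt z (hasFDerivAt_coord 0 z)
  refine hd.congr_fderiv (congrArg (· • _) ?_)
  rw [h.rpow_one_div_three_eq, h.cube_eq]
  field_simp

lemma hasFDerivAt_inv_rpow_two_div_three (h : RadicalsAt z c s) :
    HasFDerivAt (fun x : Fin 4 → ℝ ↦ (x 0 ^ ((2 : ℝ) / 3))⁻¹)
      (-(2 / (3 * c ^ 5)) • ContinuousLinearMap.proj (R := ℝ) 0) z := by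
  have hc := h.c_pos.ne'
  have hd := ((hasDerivAt_rpow_const_div_self h.u_ne_zero (2 / 3)).fun_inv
    (h.rpow_two_div_three_eq ▸ pow_ne_zero 2 hc)).comp_hasFDerivAt z (hasFDerivAt_coord 0 z)
  refine hd.congr_fderiv (congrArg (· • _) ?_)
  rw [h.rpow_two_div_three_eq, h.cube_eq]
  field_simp

lemma hasFDerivAt_sphX_zero (h : RadicalsAt z c s) :
    HasFDerivAt (sphX 0)
      (-(c ^ 3 / s * Real.sin (z 1)) • ContinuousLinearMap.proj (R := ℝ) 0
        + (s * Real.cos (z 1)) • ContinuousLinearMap.proj (R := ℝ) 1) z := by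
  refine (h.hasFDerivAt_sqrt.mul (hasFDerivAt_coord 1 z).sin).congr_fderiv ?_
  rw [h.sqrt_eq]
  module

lemma hasFDerivAt_scaledJ (h : RadicalsAt z c s) :
    HasFDerivAt scaledJ
      ((c * (4 - c ^ 6) / (3 * s ^ 3) * Real.sin (z 1) * z 3
            + (1 - 4 * c ^ 6) / (3 * c ^ 2 * s) * Real.cos (z 1) * z 2) •
          ContinuousLinearMap.proj (R := ℝ) 0
        + (c * sphJ 1 z) • ContinuousLinearMap.proj (R := ℝ) 1
        + (c * s * Real.cos (z 1)) • ContinuousLinearMap.proj (R := ℝ) 2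
        + (c ^ 4 / s * Real.sin (z 1)) • ContinuousLinearMap.proj (R := ℝ) 3) z := by
  have hc := h.c_pos.ne'
  have hs := h.s_pos.ne'
  have dJ := ((h.hasFDerivAt_div_sqrt.mul (hasFDerivAt_coord 1 z).sin).mul
    (hasFDerivAt_coord 3 z)).add
      ((h.hasFDerivAt_sqrt.mul (hasFDerivAt_coord 1 z).cos).mul (hasFDerivAt_coord 2 z))
  refine (h.hasFDerivAt_rpow_one_div_three.mul dJ).congr_fderiv ?_
  simp only [Pi.add_apply, Pi.mul_apply, h.sqrt_eq, h.rpow_one_div_three_eq, h.sphJ_one_eq]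
  rw [h.cube_eq]
  match_scalars <;> field_simp
  · ring
  · linear_combination (c ^ 3 * z 3 * Real.sin (z 1) + s ^ 2 * z 2 * Real.cos (z 1)) *
      h.sq_eq_one_sub_pow

lemma hasFDerivAt_H1Gor (h : RadicalsAt z c s) (a b : ℝ) :
    HasFDerivAt (H1Gor a b)
      ((-2 * c ^ 3 * z 2 ^ 2 + 2 * c ^ 3 * z 3 ^ 2 / s ^ 4 - a * c * Real.sin (z 1) / s
            - 2 / 3 * (a * s * Real.sin (z 1) + b) / c ^ 5) •
          ContinuousLinearMap.proj (R := ℝ) 0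
        + (a * s * Real.cos (z 1) / c ^ 2) • ContinuousLinearMap.proj (R := ℝ) 1
        + (2 * s ^ 2 * z 2) • ContinuousLinearMap.proj (R := ℝ) 2
        + (2 / 3 * (4 - c ^ 6) * z 3 / s ^ 2) • ContinuousLinearMap.proj (R := ℝ) 3) z := by
  have hc := h.c_pos.ne'
  have hs := h.s_pos.ne'
  have dT := (hasDerivAt_four_sub_sq_div_one_sub_sq h.one_sub_sq_pos.ne').comp_hasFDerivAt z
    (hasFDerivAt_coord 0 z)
  have dH := (((((hasFDerivAt_coord 0 z).pow 2).const_sub 1).mul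
      ((hasFDerivAt_coord 2 z).pow 2)).add
    ((dT.const_mul (1 / 3)).mul ((hasFDerivAt_coord 3 z).pow 2))).add
    (((h.hasFDerivAt_sphX_zero.const_mul a).add_const b).mul h.hasFDerivAt_inv_rpow_two_div_three)
  have h_near : ∀ᶠ x in nhds z, 0 < 1 - x 0 ^ 2 :=
    ((by fun_prop : Continuous fun x : Fin 4 → ℝ ↦ 1 - x 0 ^ 2).tendsto z).eventually_const_lt
      h.one_sub_sq_pos
  refine (dH.congr_fderiv ?_).congr_of_eventuallyEq (h_near.mono fun x hx ↦ H1Gor_eq a b hx)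
  simp only [Function.comp_apply, h.sphX_zero_eq, h.rpow_two_div_three_eq, h.sq_eq]
  rw [h.cube_eq]
  match_scalars <;> field_simp <;> ring

end RadicalsAt

end Differentials

section Bracket

/-- The real vector field `w`, in terms of `c = u^{1/3}` and `s = √(1 - u²)`, for which
`i e^{iφ} w` is the Hamiltonian vector field of `J₃` with respect to `Π′`. -/
noncomputable def sphJTwoField (a c s : ℝ) : Fin 4 → ℝ :=
  ![0, 0, -(a / (2 * c * s)), 0]

/-- The real vector field `v`, in terms of `c = u^{1/3}` and `s = √(1 - u²)`, for which
`i e^{iφ} v` is the Hamiltonian vector field of `x₃^{1/3} J₁` with respect to `Π′`. -/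
noncomputable def scaledJField (a c s : ℝ) (z : Fin 4 → ℝ) : Fin 4 → ℝ :=
  ![c ^ 2 * s * z 2,
    c ^ 2 * (4 - c ^ 6) * z 3 / (3 * s ^ 3),
    (4 * c ^ 6 - 1) * z 2 ^ 2 / (3 * c * s) + a * c ^ 3 * Real.sin (z 1) / (2 * s ^ 2)
      - c ^ 5 * (4 - c ^ 6) * z 3 ^ 2 / (3 * s ^ 5),
    -(a * Real.cos (z 1) / 2)]

lemma GorP_transpose (a : ℝ) (z : Fin 4 → ℝ) : (GorP a z).transpose = -GorP a z := by
  ext i j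
  fin_cases i <;> fin_cases j <;> simp [GorP]

lemma GorBr_eq_cotangentPairing (a : ℝ) (f g : (Fin 4 → ℝ) → ℝ) (z : Fin 4 → ℝ) :
    GorBr a f g z = cotangentPairing (GorP a z) (fderiv ℝ f z) (fderiv ℝ g z) :=
  (cotangentPairing_apply _ _ _).symm

lemma GorBr_self (a : ℝ) (f : (Fin 4 → ℝ) → ℝ) (z : Fin 4 → ℝ) : GorBr a f f z = 0 := by
  rw [GorBr_eq_cotangentPairing, cotangentPairing_self (GorP_transpose a z)]

namespace RadicalsAt

variable {z : Fin 4 → ℝ} {c s : ℝ}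

lemma GorBr_sphJ_two_right (h : RadicalsAt z c s) (a : ℝ) (f : (Fin 4 → ℝ) → ℝ) :
    GorBr a f (sphJ 2) z =
      I * exp (I * z 1) * (fderiv ℝ f z (sphJTwoField a c s) : ℂ) := by
  rw [GorBr_eq_cotangentPairing, (hasFDerivAt_sphJ_two z).fderiv]
  refine cotangentPairing_eq_mul_apply (fun i ↦ ?_) _
  simp only [map_neg, cotangentPairing_proj_proj, h.GorP_eq, sphJTwoField]
  fin_cases i <;>
    simp only [Fin.zero_eta, Fin.mk_one, Fin.reduceFinMk, Matrix.of_apply, Matrix.cons_val',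
      Matrix.cons_val_fin_one, Matrix.cons_val] <;>
    push_cast <;> ring

lemma GorBr_scaledJ_right (h : RadicalsAt z c s) (a : ℝ) (f : (Fin 4 → ℝ) → ℝ) :
    GorBr a f scaledJ z =
      I * exp (I * z 1) * (fderiv ℝ f z (scaledJField a c s z) : ℂ) := by
  have hc : (c : ℂ) ≠ 0 := ofReal_ne_zero.2 h.c_pos.ne'
  have hs : (s : ℂ) ≠ 0 := ofReal_ne_zero.2 h.s_pos.ne'
  rw [GorBr_eq_cotangentPairing, h.hasFDerivAt_scaledJ.fderiv]
  refine cotangentPairing_eq_mul_apply (fun i ↦ ?_) _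
  simp only [map_add, map_smul, cotangentPairing_proj_proj, real_smul, h.GorP_eq, h.sphJ_one_eq,
    I_mul_exp_I_mul_ofReal, scaledJField]
  fin_cases i <;>
    simp only [Fin.zero_eta, Fin.mk_one, Fin.reduceFinMk, Matrix.of_apply, Matrix.cons_val',
      Matrix.cons_val_fin_one, Matrix.cons_val] <;>
    push_cast <;> field_simp <;> ring

lemma fderiv_H1Gor_apply_sphJTwoField (h : RadicalsAt z c s) (a b : ℝ) :
    fderiv ℝ (H1Gor a b) z (sphJTwoField a c s) = -(a * (s * z 2 / c)) := by
  have hc := h.c_pos.ne'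
  have hs := h.s_pos.ne'
  rw [(h.hasFDerivAt_H1Gor a b).fderiv]
  simp only [sphJTwoField, add_apply, smul_apply, ContinuousLinearMap.proj_apply, Matrix.cons_val,
    smul_eq_mul]
  field_simp
  ring

lemma fderiv_H1Gor_apply_scaledJField (h : RadicalsAt z c s) (a b : ℝ) :
    fderiv ℝ (H1Gor a b) z (scaledJField a c s z) =
      -(2 / 3 * (H1Gor a b z - 4 / 3 * sphJ 2 z ^ 2) * (s * z 2 / c)) := by
  have hc := h.c_pos.ne'
  have hs := h.s_pos.ne'
  rw [(h.hasFDerivAt_H1Gor a b).fderiv, H1Gor_eq a b h.one_sub_sq_pos, h.rpow_two_div_three_eq,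
    h.sphX_zero_eq, h.sq_eq, h.cube_eq]
  simp only [sphJ, scaledJField, add_apply, smul_apply, ContinuousLinearMap.proj_apply,
    Matrix.cons_val, smul_eq_mul]
  field_simp
  linear_combination (6 * c ^ 2 * s ^ 4 * z 2 ^ 3
    + (6 * c ^ 8 - 8 * c ^ 2 * s ^ 2) * z 3 ^ 2 * z 2) * h.sq_eq_one_sub_pow

lemma GorBr_H2Gor_right (h : RadicalsAt z c s) (a b : ℝ) (f : (Fin 4 → ℝ) → ℝ) :
    GorBr a f (H2Gor a b) z = -(2 / 3) * sphJ 2 z * GorBr a f (H1Gor a b) z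
      - 2 / 3 * (H1Gor a b z - 4 / 3 * sphJ 2 z ^ 2) * GorBr a f (sphJ 2) z
      + a * GorBr a f scaledJ z := by
  have dJ2 := (hasFDerivAt_sphJ_two z).differentiableAt.hasFDerivAt
  have dH1 := (h.hasFDerivAt_H1Gor a b).differentiableAt.hasFDerivAt
  have dF := h.hasFDerivAt_scaledJ.differentiableAt.hasFDerivAt
  have dH2 := ((((dJ2.mul dH1).const_mul (-(2 / 3))).add
    ((dJ2.pow 3).const_mul (8 / 27))).add (dF.const_mul a)).congr_of_eventuallyEq
      (.of_forall (H2Gor_eq a b))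
  simp only [GorBr_eq_cotangentPairing, dH2.fderiv, map_add, map_smul, real_smul]
  push_cast
  ring

end RadicalsAt

end Bracket

/-- The Goryachev integrals H₁, H₂ are in involution with respect to the
second (complex) bracket {·,·}′ on 0 < u < 1 (bi-involution). -/
theorem Gor_bi_involution (a b : ℝ) (z : Fin 4 → ℝ) (h0 : 0 < z 0) (h1 : z 0 < 1) :
    GorBr a (H1Gor a b) (H2Gor a b) z = 0 := by
  obtain ⟨c, s, h⟩ := exists_radicalsAt h0 h1
  rw [h.GorBr_H2Gor_right, GorBr_self, h.GorBr_sphJ_two_right, h.GorBr_scaledJ_right,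
    h.fderiv_H1Gor_apply_sphJTwoField, h.fderiv_H1Gor_apply_scaledJField]
  push_cast
  ring
end

section
/- Let a ∈ ℝ, a ≠ 0, c ∈ ℝ and α ∈ ℝ, α ≠ 0. Define on a suitable open subset of ℂ⁴ with coordinates (q₁,q₂,p₁,p₂) (on which q₁ ≠ q₂, q₁q₂ ≠ 0, and fixed holomorphic branches of all the powers, square roots and logarithms below exist) the functions: u = (−2iα(q₁p₁ − q₂p₂)/(q₁ − q₂))^{1/(2α)} − c, p_φ = −i·q₁q₂(p₁ − p₂)/(q₁ − q₂), φ = −(i/2)·(2(3α−1)·ln(u+c) + ln(4q₁²q₂²(u²−1)/a²)), p_u = (3iα/(u+c) + i(uc+1)/((u+c)(u²−1)))·p_φ − i·(q₁+q₂)·(u+c)^{2α−1}. Then this transformation is canonical: with respect to the canonical Poisson bracket in (q₁,q₂,p₁,p₂) one has {u, p_u} = 1, {φ, p_φ} = 1, and {u, φ} = {u, p_φ} = {φ, p_u} = {p_u, p_φ} = 0. -/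
open Complex

/-- Partial derivative of a holomorphic function on ℂ⁴ in the `k`-th
coordinate direction, coordinates z = (q₁, q₂, p₁, p₂). -/
noncomputable def pdq (k : Fin 4) (f : (Fin 4 → ℂ) → ℂ) (z : Fin 4 → ℂ) : ℂ :=
  fderiv ℂ f z (Pi.single k 1)

/-- The canonical Poisson bracket on ℂ⁴ with coordinates (q₁, q₂, p₁, p₂):
{f,g} = Σ_{k=1,2} (∂f/∂q_k ∂g/∂p_k − ∂f/∂p_k ∂g/∂q_k). -/
noncomputable def canBrC4 (f g : (Fin 4 → ℂ) → ℂ) (z : Fin 4 → ℂ) : ℂ :=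
  pdq 0 f z * pdq 2 g z + pdq 1 f z * pdq 3 g z
    - pdq 2 f z * pdq 0 g z - pdq 3 f z * pdq 1 g z

/-!
The points `(q₁, p₁)` and `(q₂, p₂)` lie on a line `p = M + N / q`, and `(M, -(q₁ + q₂))` and
`(log (q₁q₂), N)` are two commuting canonical pairs. By its definition `u` is a function of `M`
alone and `pφ = i N`. With `A(u)` the coefficient of `pφ` in `pu`, partial fractions give
`dφ = -i d log (q₁q₂) - A(u) du`, while `pu = -(q₁ + q₂) / u'(M) + A(u) pφ`. So the map is the
point transformation `M ↦ u` and the rescaling of the second pair by `(-i, i)`, followed by the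
gauge transformation with potential `A`; each of these is canonical.
-/

open Filter Topology

/-- A Darboux (symplectic) quadruple for a bilinear form `ω`: the positions are `x`, `y` and their
conjugate momenta are `px`, `py`. Applied to differentials at a point, with `ω` the Poisson form,
it says that a change of coordinates is canonical at that point. -/
structure IsDarbouxFrame {R V : Type*} [CommRing R] [AddCommGroup V] [Module R V]
    (ω : LinearMap.BilinForm R V) (x y px py : V) : Prop where
  x_px : ω x px = 1
  y_py : ω y py = 1
  x_y : ω x y = 0
  x_py : ω x py = 0
  y_px : ω y px = 0
  px_py : ω px py = 0

namespace IsDarbouxFrame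

variable {R V : Type*} [CommRing R] [AddCommGroup V] [Module R V]
  {ω : LinearMap.BilinForm R V} {x y px py : V}

lemma smul (h : IsDarbouxFrame ω x y px py) {r r' s s' : R} (hr : r * r' = 1)
    (hs : s * s' = 1) : IsDarbouxFrame ω (r • x) (s • y) (r' • px) (s' • py) where
  x_px := by simp [h.x_px, mul_comm r', hr]
  y_py := by simp [h.y_py, mul_comm s', hs]
  x_y := by simp [h.x_y]
  x_py := by simp [h.x_py]
  y_px := by simp [h.y_px]
  px_py := by simp [h.px_py]

lemma shear (h : IsDarbouxFrame ω x y px py) (hω : ω.IsAlt) (a b : R) :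
    IsDarbouxFrame ω x (y - a • x) (px + a • py + b • x) py where
  x_px := by simp [h.x_px, h.x_py, hω.self_eq_zero]
  y_py := by simp [h.y_py, h.x_py]
  x_y := by simp [h.x_y, hω.self_eq_zero]
  x_py := h.x_py
  y_px := by simp [h.x_px, h.y_py, h.x_py, h.y_px, ← hω.neg_eq x y, h.x_y, hω.self_eq_zero]
  px_py := by simp [h.px_py, h.x_py, hω.self_eq_zero]

end IsDarbouxFrame

section Derivatives

variable {𝕜 E : Type*} [NontriviallyNormedField 𝕜] [NormedAddCommGroup E] [NormedSpace 𝕜 E]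
  {f g L : E → 𝕜} {f' g' : E →L[𝕜] 𝕜} {z : E}

lemma hasFDerivAt_div (hf : HasFDerivAt f f' z) (hg : HasFDerivAt g g' z) (hz : g z ≠ 0) :
    HasFDerivAt (fun y => f y / g y) ((g z)⁻¹ • (f' - (f z / g z) • g')) z := by
  have hinv := (hasDerivAt_inv hz).comp_hasFDerivAt z hg
  have h := hf.fun_mul hinv
  refine (h.congr_fderiv ?_).congr_of_eventuallyEq (.of_forall fun y => div_eq_mul_inv _ _)
  ext v
  simp only [Function.comp_apply, add_apply, sub_apply, smul_apply, smul_eq_mul]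
  field_simp
  ring

lemma hasFDerivAt_of_comp_eventuallyEq [CompleteSpace 𝕜] {h : 𝕜 → 𝕜} {h' : 𝕜}
    (hL : ContinuousAt L z) (hh : HasStrictDerivAt h h' (L z)) (hh' : h' ≠ 0)
    (hf : HasFDerivAt f f' z) (heq : ∀ᶠ y in 𝓝 z, h (L y) = f y) :
    HasFDerivAt L (h'⁻¹ • f') z := by
  have hinv := (hh.to_localInverse hh').hasDerivAt
  rw [heq.self_of_nhds] at hinv
  refine (hinv.comp_hasFDerivAt z hf).congr_of_eventuallyEq ?_
  filter_upwards [heq, hL.eventually (hh.eventually_left_inverse hh')] with y hy hLy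
  rw [Function.comp_apply, ← hy, hLy]

end Derivatives

section JacobiFunctions

variable {E : Type*} [NormedAddCommGroup E] [NormedSpace ℂ E] {a c α : ℂ} {z : E}
  {u φ pu pφ L L₁ L₂ f M N P S : E → ℂ} {f' u' pφ' M' N' P' S' : E →L[ℂ] ℂ}

lemma hasFDerivAt_of_exp_mul_eventuallyEq {s : ℂ} (hs : s ≠ 0) (hL : ContinuousAt L z)
    (hf : HasFDerivAt f f' z) (heq : ∀ᶠ y in 𝓝 z, exp (s * L y) = f y) :
    HasFDerivAt L ((s * f z)⁻¹ • f') z := by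
  have hexp : HasStrictDerivAt (fun x => exp (s * x)) (s * f z) (L z) := by
    rw [← heq.self_of_nhds, mul_comm]
    simpa using ((hasStrictDerivAt_id (L z)).const_mul s).cexp
  refine hasFDerivAt_of_comp_eventuallyEq hL hexp (mul_ne_zero hs ?_) hf heq
  rw [← heq.self_of_nhds]
  exact exp_ne_zero _

lemma hasFDerivAt_jacobi_u (hα : α ≠ 0) (hL₁c : ContinuousAt L₁ z) (hM : HasFDerivAt M M' z)
    (hL₁ : ∀ᶠ y in 𝓝 z, exp (L₁ y) = u y + c)
    (hu : ∀ᶠ y in 𝓝 z, exp (2 * α * L₁ y) = -2 * I * α * M y) :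
    HasFDerivAt u ((-I * exp (-((2 * α - 1) * L₁ z))) • M') z := by
  have hL₁' := hasFDerivAt_of_exp_mul_eventuallyEq (mul_ne_zero two_ne_zero hα) hL₁c
    (hM.const_mul (-2 * I * α)) hu
  refine ((hL₁'.cexp.sub_const c).congr_fderiv ?_).congr_of_eventuallyEq
    (hL₁.mono fun y hy => by simp [hy])
  rw [← hu.self_of_nhds, smul_smul, smul_smul, sub_mul, one_mul, neg_sub, exp_sub]
  congr 1
  field_simp

/-- The potential `A` of the gauge transformation `(φ, pu) ↦ (φ - ∫ A du, pu + A(u) pφ)`: it is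
the coefficient of `pφ` in the formula for `pu`. -/
noncomputable def gaugePotential (c α x : ℂ) : ℂ :=
  3 * I * α / (x + c) + I * (x * c + 1) / ((x + c) * (x ^ 2 - 1))

lemma gaugePotential_eq {x : ℂ} (hx : x + c ≠ 0) (hx' : x ^ 2 - 1 ≠ 0) :
    gaugePotential c α x = I * ((3 * α - 1) / (x + c) + x / (x ^ 2 - 1)) := by
  unfold gaugePotential
  field_simp
  ring

lemma differentiableAt_gaugePotential {x : ℂ} (hx : x + c ≠ 0) (hx' : x ^ 2 - 1 ≠ 0) :
    DifferentiableAt ℂ (gaugePotential c α) x := by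
  have := mul_ne_zero hx hx'
  unfold gaugePotential
  fun_prop (disch := assumption)

lemma hasFDerivAt_jacobi_φ (ha : a ≠ 0) (hL₁c : ContinuousAt L₁ z) (hL₂c : ContinuousAt L₂ z)
    (hu : HasFDerivAt u u' z) (hP : HasFDerivAt P P' z)
    (hL₁ : ∀ᶠ y in 𝓝 z, exp (L₁ y) = u y + c)
    (hL₂ : ∀ᶠ y in 𝓝 z, exp (L₂ y) = 4 * P y ^ 2 * (u y ^ 2 - 1) / a ^ 2)
    (hφ : ∀ᶠ y in 𝓝 z, φ y = -(I / 2) * (2 * (3 * α - 1) * L₁ y + L₂ y)) :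
    HasFDerivAt φ (-I • (P z)⁻¹ • P' - gaugePotential c α (u z) • u') z := by
  have hw : u z + c ≠ 0 := hL₁.self_of_nhds ▸ exp_ne_zero _
  have hne : 4 * P z ^ 2 * (u z ^ 2 - 1) / a ^ 2 ≠ 0 := hL₂.self_of_nhds ▸ exp_ne_zero _
  have hPz : P z ≠ 0 := by rintro h; simp [h] at hne
  have huz : u z ^ 2 - 1 ≠ 0 := by rintro h; simp [h] at hne
  have hL₁' := hasFDerivAt_of_exp_mul_eventuallyEq one_ne_zero hL₁c (hu.add_const c)
    (by simpa using hL₁)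
  have hL₂' := hasFDerivAt_of_exp_mul_eventuallyEq one_ne_zero hL₂c
    ((((hP.pow 2).const_mul 4).fun_mul ((hu.pow 2).sub_const 1)).mul_const (a ^ 2)⁻¹)
    (by simpa [div_eq_mul_inv] using hL₂)
  refine ((((hL₁'.const_mul (2 * (3 * α - 1))).fun_add hL₂').const_mul (-(I / 2))).congr_fderiv
    ?_).congr_of_eventuallyEq hφ
  rw [gaugePotential_eq hw huz]
  ext v
  simp only [add_apply, sub_apply, smul_apply, smul_eq_mul, nsmul_eq_mul, Nat.cast_ofNat,
    Nat.add_one_sub_one, pow_one, one_mul]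
  field_simp
  ring

/-- The coefficient `b` of `du` drops out of every bracket, so it is left unspecified. -/
lemma exists_hasFDerivAt_jacobi_pu (hL₁c : ContinuousAt L₁ z) (hu : HasFDerivAt u u' z)
    (huz : u z ^ 2 - 1 ≠ 0) (hpφ : HasFDerivAt pφ pφ' z) (hS : HasFDerivAt S S' z)
    (hL₁ : ∀ᶠ y in 𝓝 z, exp (L₁ y) = u y + c)
    (hpu : ∀ᶠ y in 𝓝 z, pu y = gaugePotential c α (u y) * pφ y
      - I * S y * exp ((2 * α - 1) * L₁ y)) :
    ∃ b : ℂ, HasFDerivAt pu ((I * exp ((2 * α - 1) * L₁ z)) • (-S')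
      + gaugePotential c α (u z) • pφ' + b • u') z := by
  have hw : u z + c ≠ 0 := hL₁.self_of_nhds ▸ exp_ne_zero _
  have hL₁' := hasFDerivAt_of_exp_mul_eventuallyEq one_ne_zero hL₁c (hu.add_const c)
    (by simpa using hL₁)
  have hA := (differentiableAt_gaugePotential (α := α) hw huz).hasDerivAt.comp_hasFDerivAt z hu
  refine ⟨pφ z * deriv (gaugePotential c α) (u z)
      - I * S z * exp ((2 * α - 1) * L₁ z) * ((2 * α - 1) / (u z + c)),
    (((hA.fun_mul hpφ).fun_sub ((hS.const_mul I).fun_mul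
      (hL₁'.const_mul (2 * α - 1)).cexp)).congr_fderiv ?_).congr_of_eventuallyEq hpu⟩
  ext v
  simp only [Function.comp_apply, add_apply, sub_apply, neg_apply, smul_apply, smul_eq_mul, one_mul]
  ring

lemma IsDarbouxFrame.jacobi {ω : LinearMap.BilinForm ℂ (E →L[ℂ] ℂ)}
    (h : IsDarbouxFrame ω M' ((P z)⁻¹ • P') (-S') N') (hω : ω.IsAlt) (ha : a ≠ 0) (hα : α ≠ 0)
    (hL₁c : ContinuousAt L₁ z) (hL₂c : ContinuousAt L₂ z)
    (hM : HasFDerivAt M M' z) (hN : HasFDerivAt N N' z)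
    (hP : HasFDerivAt P P' z) (hS : HasFDerivAt S S' z)
    (hL₁ : ∀ᶠ y in 𝓝 z, exp (L₁ y) = u y + c)
    (hu : ∀ᶠ y in 𝓝 z, exp (2 * α * L₁ y) = -2 * I * α * M y)
    (hpφ : ∀ᶠ y in 𝓝 z, pφ y = I * N y)
    (hL₂ : ∀ᶠ y in 𝓝 z, exp (L₂ y) = 4 * P y ^ 2 * (u y ^ 2 - 1) / a ^ 2)
    (hφ : ∀ᶠ y in 𝓝 z, φ y = -(I / 2) * (2 * (3 * α - 1) * L₁ y + L₂ y))
    (hpu : ∀ᶠ y in 𝓝 z, pu y = gaugePotential c α (u y) * pφ y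
      - I * S y * exp ((2 * α - 1) * L₁ y)) :
    IsDarbouxFrame ω (fderiv ℂ u z) (fderiv ℂ φ z) (fderiv ℂ pu z) (fderiv ℂ pφ z) := by
  have huz : u z ^ 2 - 1 ≠ 0 := fun huz => exp_ne_zero (L₂ z) (by simp [hL₂.self_of_nhds, huz])
  have du := hasFDerivAt_jacobi_u hα hL₁c hM hL₁ hu
  have dφ := hasFDerivAt_jacobi_φ ha hL₁c hL₂c du hP hL₁ hL₂ hφ
  have dpφ := (hN.const_mul I).congr_of_eventuallyEq hpφ
  obtain ⟨b, dpu⟩ := exists_hasFDerivAt_jacobi_pu hL₁c du huz dpφ hS hL₁ hpu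
  have hu_scale : -I * exp (-((2 * α - 1) * L₁ z)) * (I * exp ((2 * α - 1) * L₁ z)) = 1 := by
    rw [mul_mul_mul_comm, ← exp_add]
    simp
  have hφ_scale : -I * I = 1 := by simp
  rw [du.fderiv, dφ.fderiv, dpu.fderiv, dpφ.fderiv]
  exact (h.smul hu_scale hφ_scale).shear hω _ b

end JacobiFunctions

section Separation

variable {z : Fin 4 → ℂ}

/-- The Poisson bivector of `canBrC4`, as a bilinear form on covectors. -/
noncomputable def poissonForm : LinearMap.BilinForm ℂ ((Fin 4 → ℂ) →L[ℂ] ℂ) :=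
  LinearMap.mk₂ ℂ
    (fun ξ η => ξ (Pi.single 0 1) * η (Pi.single 2 1) + ξ (Pi.single 1 1) * η (Pi.single 3 1)
      - ξ (Pi.single 2 1) * η (Pi.single 0 1) - ξ (Pi.single 3 1) * η (Pi.single 1 1))
    (fun _ _ _ => by simp only [add_apply]; ring)
    (fun _ _ _ => by simp only [smul_apply, smul_eq_mul]; ring)
    (fun _ _ _ => by simp only [add_apply]; ring)
    (fun _ _ _ => by simp only [smul_apply, smul_eq_mul]; ring)

lemma canBrC4_eq_poissonForm (f g : (Fin 4 → ℂ) → ℂ) (z : Fin 4 → ℂ) :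
    canBrC4 f g z = poissonForm (fderiv ℂ f z) (fderiv ℂ g z) :=
  rfl

lemma isAlt_poissonForm : poissonForm.IsAlt := fun ξ => by
  simp only [poissonForm, LinearMap.mk₂_apply]
  ring

/-- The intercept `M` of the line `p = M + N / q` through the separated points `(q₁, p₁)` and
`(q₂, p₂)`, the separation relation behind the change of variables. -/
noncomputable def sepIntercept (z : Fin 4 → ℂ) : ℂ :=
  (z 0 * z 2 - z 1 * z 3) / (z 0 - z 1)

/-- The slope `N` of the line `p = M + N / q` (as a function of `1 / q`) through the separated
points `(q₁, p₁)` and `(q₂, p₂)`. -/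
noncomputable def sepSlope (z : Fin 4 → ℂ) : ℂ :=
  -(z 0 * z 1 * (z 2 - z 3)) / (z 0 - z 1)

/-- The differential of the `i`-th coordinate of `(q₁, q₂, p₁, p₂)`. -/
noncomputable abbrev dcoord (i : Fin 4) : (Fin 4 → ℂ) →L[ℂ] ℂ :=
  ContinuousLinearMap.proj i

lemma poissonForm_dcoord (i j : Fin 4) : poissonForm (dcoord i) (dcoord j) =
    !![0, 0, 1, 0; 0, 0, 0, 1; -1, 0, 0, 0; 0, -1, 0, 0] i j := by
  fin_cases i <;> fin_cases j <;> simp [poissonForm]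

lemma hasFDerivAt_coord_s19 (i : Fin 4) (z : Fin 4 → ℂ) :
    HasFDerivAt (fun y : Fin 4 → ℂ => y i) (dcoord i) z :=
  hasFDerivAt_apply i z

lemma hasFDerivAt_sepIntercept (hz : z 0 ≠ z 1) :
    HasFDerivAt sepIntercept ((z 0 - z 1)⁻¹ • (z 0 • dcoord 2 + z 2 • dcoord 0
      - (z 1 • dcoord 3 + z 3 • dcoord 1) - sepIntercept z • (dcoord 0 - dcoord 1))) z :=
  hasFDerivAt_div
    (((hasFDerivAt_coord_s19 0 z).fun_mul (hasFDerivAt_coord_s19 2 z)).fun_sub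
      ((hasFDerivAt_coord_s19 1 z).fun_mul (hasFDerivAt_coord_s19 3 z)))
    ((hasFDerivAt_coord_s19 0 z).fun_sub (hasFDerivAt_coord_s19 1 z)) (sub_ne_zero.2 hz)

lemma hasFDerivAt_sepSlope (hz : z 0 ≠ z 1) :
    HasFDerivAt sepSlope ((z 0 - z 1)⁻¹ • (-((z 0 * z 1) • (dcoord 2 - dcoord 3)
      + (z 2 - z 3) • (z 0 • dcoord 1 + z 1 • dcoord 0)) - sepSlope z • (dcoord 0 - dcoord 1))) z :=
  hasFDerivAt_div
    (((hasFDerivAt_coord_s19 0 z).fun_mul (hasFDerivAt_coord_s19 1 z)).fun_mul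
      ((hasFDerivAt_coord_s19 2 z).fun_sub (hasFDerivAt_coord_s19 3 z))).fun_neg
    ((hasFDerivAt_coord_s19 0 z).fun_sub (hasFDerivAt_coord_s19 1 z)) (sub_ne_zero.2 hz)

lemma hasFDerivAt_coord_add :
    HasFDerivAt (fun y : Fin 4 → ℂ => y 0 + y 1) (dcoord 0 + dcoord 1) z :=
  (hasFDerivAt_coord_s19 0 z).fun_add (hasFDerivAt_coord_s19 1 z)

lemma hasFDerivAt_coord_mul :
    HasFDerivAt (fun y : Fin 4 → ℂ => y 0 * y 1) (z 0 • dcoord 1 + z 1 • dcoord 0) z :=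
  (hasFDerivAt_coord_s19 0 z).fun_mul (hasFDerivAt_coord_s19 1 z)

lemma isDarbouxFrame_sep (hz : z 0 ≠ z 1) (hz' : z 0 * z 1 ≠ 0) :
    IsDarbouxFrame poissonForm (fderiv ℂ sepIntercept z)
      ((z 0 * z 1)⁻¹ • fderiv ℂ (fun y : Fin 4 → ℂ => y 0 * y 1) z)
      (-fderiv ℂ (fun y : Fin 4 → ℂ => y 0 + y 1) z) (fderiv ℂ sepSlope z) := by
  have hd := sub_ne_zero.2 hz
  obtain ⟨hz₀, hz₁⟩ := mul_ne_zero_iff.1 hz'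
  rw [(hasFDerivAt_sepIntercept hz).fderiv, (hasFDerivAt_sepSlope hz).fderiv,
    hasFDerivAt_coord_add.fderiv, hasFDerivAt_coord_mul.fderiv]
  constructor <;>
    simp only [map_add, map_sub, map_neg, map_smul, LinearMap.add_apply, LinearMap.sub_apply,
      LinearMap.neg_apply, LinearMap.smul_apply, smul_eq_mul, poissonForm_dcoord, Matrix.of_apply,
      Matrix.cons_val, sepIntercept, sepSlope] <;>
    field_simp <;> ring

end Separation

theorem jacobi_change_of_variables_is_canonical_general {a c α : ℂ} (ha : a ≠ 0) (hα : α ≠ 0)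
    {U : Set (Fin 4 → ℂ)} (hU : IsOpen U) {u φ pu pφ L₁ L₂ : (Fin 4 → ℂ) → ℂ}
    (hL₁c : ContinuousOn L₁ U) (hL₂c : ContinuousOn L₂ U) (hq : ∀ z ∈ U, z 0 ≠ z 1)
    (hL₁ : ∀ z ∈ U, exp (L₁ z) = u z + c)
    (hu : ∀ z ∈ U, exp (2 * α * L₁ z) = -2 * I * α * (z 0 * z 2 - z 1 * z 3) / (z 0 - z 1))
    (hpφ : ∀ z ∈ U, pφ z = -I * z 0 * z 1 * (z 2 - z 3) / (z 0 - z 1))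
    (hL₂ : ∀ z ∈ U, exp (L₂ z) = 4 * z 0 ^ 2 * z 1 ^ 2 * (u z ^ 2 - 1) / a ^ 2)
    (hφ : ∀ z ∈ U, φ z = -(I / 2) * (2 * (3 * α - 1) * L₁ z + L₂ z))
    (hpu : ∀ z ∈ U, pu z
      = (3 * I * α / (u z + c) + I * (u z * c + 1) / ((u z + c) * (u z ^ 2 - 1))) * pφ z
        - I * (z 0 + z 1) * exp ((2 * α - 1) * L₁ z)) :
    ∀ z ∈ U,
      canBrC4 u pu z = 1 ∧ canBrC4 φ pφ z = 1 ∧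
      canBrC4 u φ z = 0 ∧ canBrC4 u pφ z = 0 ∧
      canBrC4 φ pu z = 0 ∧ canBrC4 pu pφ z = 0 := by
  intro z hz
  have near {p : (Fin 4 → ℂ) → Prop} (h : ∀ y ∈ U, p y) : ∀ᶠ y in 𝓝 z, p y :=
    eventually_of_mem (hU.mem_nhds hz) h
  have hne : 4 * z 0 ^ 2 * z 1 ^ 2 * (u z ^ 2 - 1) / a ^ 2 ≠ 0 := hL₂ z hz ▸ exp_ne_zero _
  have hqz : z 0 * z 1 ≠ 0 := by
    rintro h
    rcases mul_eq_zero.1 h with h | h <;> simp [h] at hne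
  have hM := (hasFDerivAt_sepIntercept (hq z hz)).differentiableAt.hasFDerivAt
  have hN := (hasFDerivAt_sepSlope (hq z hz)).differentiableAt.hasFDerivAt
  have frame := (isDarbouxFrame_sep (hq z hz) hqz).jacobi isAlt_poissonForm ha hα
    (hL₁c.continuousAt (hU.mem_nhds hz)) (hL₂c.continuousAt (hU.mem_nhds hz)) hM hN
    hasFDerivAt_coord_mul.differentiableAt.hasFDerivAt
    hasFDerivAt_coord_add.differentiableAt.hasFDerivAt
    (near hL₁) (near fun y hy => by rw [hu y hy, sepIntercept, mul_div_assoc])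
    (near fun y hy => by rw [hpφ y hy, sepSlope]; ring)
    (near fun y hy => by rw [hL₂ y hy]; ring) (near hφ) (near hpu)
  simp only [canBrC4_eq_poissonForm]
  exact ⟨frame.x_px, frame.y_py, frame.x_y, frame.x_py, frame.y_px, frame.px_py⟩

/-- The Jacobi-type change of variables from the separated coordinates
(q₁,q₂,p₁,p₂) back to (u, φ, p_u, p_φ) is a canonical transformation.  The
branches of the powers and logarithms are encoded by holomorphic functions
L₁, L₂ with exp L₁ = u + c (so (u+c)^s = exp(s·L₁)) and
exp L₂ = 4q₁²q₂²(u²−1)/a²; the defining relations are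
(u+c)^{2α} = −2iα(q₁p₁−q₂p₂)/(q₁−q₂), p_φ = −i q₁q₂(p₁−p₂)/(q₁−q₂),
φ = −(i/2)(2(3α−1)L₁ + L₂), and
p_u = (3iα/(u+c) + i(uc+1)/((u+c)(u²−1)))p_φ − i(q₁+q₂)(u+c)^{2α−1}. -/
theorem jacobi_change_of_variables_is_canonical (a c α : ℝ) (ha : a ≠ 0) (hα : α ≠ 0)
    (U : Set (Fin 4 → ℂ)) (hU : IsOpen U)
    (u φ pu pφ L₁ L₂ : (Fin 4 → ℂ) → ℂ)
    (hud : ∀ z ∈ U, DifferentiableAt ℂ u z)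
    (hφd : ∀ z ∈ U, DifferentiableAt ℂ φ z)
    (hpud : ∀ z ∈ U, DifferentiableAt ℂ pu z)
    (hpφd : ∀ z ∈ U, DifferentiableAt ℂ pφ z)
    (hL₁d : ∀ z ∈ U, DifferentiableAt ℂ L₁ z)
    (hL₂d : ∀ z ∈ U, DifferentiableAt ℂ L₂ z)
    (hreg : ∀ z ∈ U, z 0 ≠ z 1 ∧ z 0 * z 1 ≠ 0 ∧ u z + (c : ℂ) ≠ 0 ∧ (u z) ^ 2 - 1 ≠ 0)
    (hL₁ : ∀ z ∈ U, Complex.exp (L₁ z) = u z + (c : ℂ))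
    (hu : ∀ z ∈ U, Complex.exp (2 * (α : ℂ) * L₁ z)
      = -2 * Complex.I * (α : ℂ) * (z 0 * z 2 - z 1 * z 3) / (z 0 - z 1))
    (hpφ : ∀ z ∈ U, pφ z = -Complex.I * z 0 * z 1 * (z 2 - z 3) / (z 0 - z 1))
    (hL₂ : ∀ z ∈ U, Complex.exp (L₂ z)
      = 4 * (z 0) ^ 2 * (z 1) ^ 2 * ((u z) ^ 2 - 1) / (a : ℂ) ^ 2)
    (hφ : ∀ z ∈ U, φ z = -(Complex.I / 2) * (2 * (3 * (α : ℂ) - 1) * L₁ z + L₂ z))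
    (hpu : ∀ z ∈ U, pu z
      = (3 * Complex.I * (α : ℂ) / (u z + (c : ℂ))
          + Complex.I * (u z * (c : ℂ) + 1) / ((u z + (c : ℂ)) * ((u z) ^ 2 - 1))) * pφ z
        - Complex.I * (z 0 + z 1) * Complex.exp ((2 * (α : ℂ) - 1) * L₁ z)) :
    ∀ z ∈ U,
      canBrC4 u pu z = 1 ∧ canBrC4 φ pφ z = 1 ∧
      canBrC4 u φ z = 0 ∧ canBrC4 u pφ z = 0 ∧
      canBrC4 φ pu z = 0 ∧ canBrC4 pu pφ z = 0 := by
  exact jacobi_change_of_variables_is_canonical_general (mod_cast ha) (mod_cast hα) hU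
    (fun z hz => (hL₁d z hz).continuousAt.continuousWithinAt)
    (fun z hz => (hL₂d z hz).continuousAt.continuousWithinAt)
    (fun z hz => (hreg z hz).1) hL₁ hu hpφ hL₂ hφ hpu
end
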